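/- Let X be a topological space and let A and B be irreducible subsets of X with X = A ∪ B. If the intersection C := A ∩ B is nonempty and is open both in the subspace topology of A and in the subspace topology of B, then X is an irreducible topological space. -/

import Mathlib

/-!
The set `A` is dense: a nonempty open set meets `A` or `B`, and if it meets `B` it also meets
`A ∩ B`, because nonempty relatively open subsets of the irreducible set `B` always intersect.
A space with a dense irreducible subset is irreducible: two nonempty open sets both meet `A`,
so their intersection meets `A`.
-/

/-- Lemma 7.2: if a topological space `X` is the union of two irreducible subsets
`A` and `B` whose intersection is nonempty and open in both subspace topologies,
then `X` is irreducible. -/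
theorem union_irreducible_of_inter_open {X : Type*} [TopologicalSpace X] (A B : Set X)
    (hA : IsIrreducible A) (hB : IsIrreducible B) (hcover : A ∪ B = Set.univ)
    (hne : (A ∩ B).Nonempty)
    (hopenA : IsOpen ((Subtype.val : A → X) ⁻¹' (A ∩ B)))
    (hopenB : IsOpen ((Subtype.val : B → X) ⁻¹' (A ∩ B))) :
    IrreducibleSpace X := by
  obtain ⟨O, hO, hOC⟩ := isOpen_induced_iff.mp hopenB
  have mem_O_iff : ∀ x ∈ B, x ∈ O ↔ x ∈ A ∩ B := fun x hx =>
    Set.ext_iff.mp hOC ⟨x, hx⟩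
  -- `A` is dense: an open set meeting `B` also meets `A ∩ B`, which is a nonempty open
  -- subset of the irreducible set `B`.
  have meets_A : ∀ U : Set X, IsOpen U → U.Nonempty → (A ∩ U).Nonempty := by
    rintro U hU ⟨x, hxU⟩
    rcases (hcover.symm ▸ Set.mem_univ x : x ∈ A ∪ B) with hxA | hxB
    · exact ⟨x, hxA, hxU⟩
    · obtain ⟨c, hc⟩ := hne
      obtain ⟨y, hyB, hyU, hyO⟩ := hB.2 U O hU hO ⟨x, hxB, hxU⟩
        ⟨c, hc.2, (mem_O_iff c hc.2).mpr hc⟩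
      exact ⟨y, ((mem_O_iff y hyB).mp hyO).1, hyU⟩
  have hpre : IsPreirreducible (Set.univ : Set X) := by
    rintro U V hU hV ⟨x, -, hxU⟩ ⟨y, -, hyV⟩
    obtain ⟨z, -, hz⟩ := hA.2 U V hU hV (meets_A U hU ⟨x, hxU⟩) (meets_A V hV ⟨y, hyV⟩)
    exact ⟨z, Set.mem_univ z, hz⟩
  exact { isPreirreducible_univ := hpre, toNonempty := ⟨hne.some⟩ }
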